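/- Define the 2n×2n real matrix M_∅ indexed by pairs (i,s) ∈ [n]×{in,out} by M_∅((i,s),(j,t)) = (1/(n−1))·(Pr[j has state t | i has state s] − Pr[j has state t]) for i ≠ j, and M_∅((i,s),(i,t)) = 0. Then charpoly(M_∅) = X^n · charpoly((1/(n−1))·Ψ_μ) in ℝ[X]; that is, the spectrum of M_∅ as a multiset is the union of the spectrum of (1/(n−1))·Ψ_μ with n additional copies of 0. -/

import Mathlib

open scoped Classical
open Finset Polynomial

noncomputable section

namespace PaperStmt

variable {n : ℕ}

/-- Probability of an event under `μ`. -/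
def prE (μ : Finset (Fin n) → ℝ) (E : Finset (Fin n) → Prop) : ℝ :=
  ∑ S : Finset (Fin n), if E S then μ S else 0

/-- Conditional probability `Pr[E | F]` under `μ`. -/
def condPrE (μ : Finset (Fin n) → ℝ) (E F : Finset (Fin n) → Prop) : ℝ :=
  prE μ (fun S => E S ∧ F S) / prE μ F

/-- The pairwise influence matrix `Ψ_μ`. -/
def psi (μ : Finset (Fin n) → ℝ) : Matrix (Fin n) (Fin n) ℝ :=
  fun i j => if i = j then 0 else
    condPrE μ (fun S => j ∈ S) (fun S => i ∈ S)
      - condPrE μ (fun S => j ∈ S) (fun S => i ∉ S)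

/-- The event "`i` has state `s`" (`true` = in, `false` = out). -/
def stateEvent (i : Fin n) (s : Bool) : Finset (Fin n) → Prop :=
  fun S => if s then i ∈ S else i ∉ S

/-- The centered walk matrix `M_∅`. -/
def centeredWalk (μ : Finset (Fin n) → ℝ) :
    Matrix (Fin n × Bool) (Fin n × Bool) ℝ :=
  fun p q => if p.1 = q.1 then 0 else
    (1 / ((n : ℝ) - 1)) *
      (condPrE μ (stateEvent q.1 q.2) (stateEvent p.1 p.2)
        - prE μ (stateEvent q.1 q.2))

lemma stateEvent_true (i : Fin n) : stateEvent i true = fun S => i ∈ S := by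
  funext S; simp [stateEvent]

lemma stateEvent_false (i : Fin n) : stateEvent i false = fun S => ¬ i ∈ S := by
  funext S; simp [stateEvent]

lemma prE_not (μ : Finset (Fin n) → ℝ) (E : Finset (Fin n) → Prop) :
    prE μ (fun S => ¬ E S) = ∑ S : Finset (Fin n), μ S - prE μ E := by
  unfold prE
  rw [← Finset.sum_sub_distrib]
  refine Finset.sum_congr rfl fun S _ => ?_
  by_cases h : E S <;> simp [h]

lemma prE_not_and (μ : Finset (Fin n) → ℝ) (E F : Finset (Fin n) → Prop) :
    prE μ (fun S => ¬ E S ∧ F S) = prE μ F - prE μ (fun S => E S ∧ F S) := by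
  unfold prE
  rw [← Finset.sum_sub_distrib]
  refine Finset.sum_congr rfl fun S _ => ?_
  by_cases h : E S <;> simp [h]

lemma prE_and_not (μ : Finset (Fin n) → ℝ) (E F : Finset (Fin n) → Prop) :
    prE μ (fun S => E S ∧ ¬ F S) = prE μ E - prE μ (fun S => E S ∧ F S) := by
  unfold prE
  rw [← Finset.sum_sub_distrib]
  refine Finset.sum_congr rfl fun S _ => ?_
  by_cases h : F S <;> simp [h]

/-- The left factor of `centeredWalk μ`: row `(i, s)` is supported on column `i`, where it is the
centered indicator of the state `in`. -/
def centeredIndicator (μ : Finset (Fin n) → ℝ) : Matrix (Fin n × Bool) (Fin n) ℝ :=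
  fun p k => if p.1 = k then (if p.2 then 1 else 0) - prE μ (fun S => k ∈ S) else 0

/-- The right factor of `centeredWalk μ`: row `k` is `1` at `(k, in)` and `-1` at `(k, out)`. -/
def stateSign (n : ℕ) : Matrix (Fin n) (Fin n × Bool) ℝ :=
  fun k q => if k = q.1 then (if q.2 then 1 else -1) else 0

lemma stateSign_mul_centeredIndicator (μ : Finset (Fin n) → ℝ) :
    stateSign n * centeredIndicator μ = 1 := by
  ext i j
  by_cases h : i = j <;>
    simp [Matrix.mul_apply, Fintype.sum_prod_type, stateSign, centeredIndicator,
      Matrix.one_apply, h]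

lemma centeredWalk_apply_eq_mul_psi {μ : Finset (Fin n) → ℝ}
    (hsum : ∑ S : Finset (Fin n), μ S = 1)
    (hmarg : ∀ i : Fin n, 0 < prE μ (fun S => i ∈ S) ∧ prE μ (fun S => i ∈ S) < 1)
    (i j : Fin n) (s t : Bool) :
    centeredWalk μ (i, s) (j, t) =
      ((if s then 1 else 0) - prE μ (fun S => i ∈ S)) * (1 / ((n : ℝ) - 1) * psi μ i j) *
        (if t then 1 else -1) := by
  by_cases hij : i = j
  · simp [centeredWalk, psi, hij]
  have h0 : prE μ (fun S => i ∈ S) ≠ 0 := (hmarg i).1.ne'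
  have h1 : 1 - prE μ (fun S => i ∈ S) ≠ 0 := (sub_pos.2 (hmarg i).2).ne'
  cases s <;> cases t <;>
    simp only [centeredWalk, psi, hij, stateEvent_true, stateEvent_false, condPrE, prE_not,
      prE_not_and, prE_and_not, hsum, if_true, if_false, Bool.false_eq_true] <;>
    generalize 1 / ((n : ℝ) - 1) = c <;>
    field_simp <;>
    ring

lemma centeredWalk_eq_mul {μ : Finset (Fin n) → ℝ}
    (hsum : ∑ S : Finset (Fin n), μ S = 1)
    (hmarg : ∀ i : Fin n, 0 < prE μ (fun S => i ∈ S) ∧ prE μ (fun S => i ∈ S) < 1) :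
    centeredWalk μ =
      centeredIndicator μ * (((1 / ((n : ℝ) - 1)) • psi μ) * stateSign n) := by
  ext ⟨i, s⟩ ⟨j, t⟩
  rw [centeredWalk_apply_eq_mul_psi hsum hmarg]
  simp [Matrix.mul_apply, centeredIndicator, stateSign]

/-- `charpoly(M_∅) = X^n · charpoly((1/(n-1)) • Ψ_μ)`. -/
theorem statement8 (n : ℕ) (hn : 2 ≤ n) (μ : Finset (Fin n) → ℝ)
    (hpos : ∀ S, 0 ≤ μ S) (hsum : ∑ S : Finset (Fin n), μ S = 1)
    (hmarg : ∀ i : Fin n, 0 < prE μ (fun S => i ∈ S)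
      ∧ prE μ (fun S => i ∈ S) < 1) :
    (centeredWalk μ).charpoly
      = X ^ n * ((1 / ((n : ℝ) - 1)) • psi μ).charpoly := by
  have hcomm := Matrix.charpoly_mul_comm' (centeredIndicator μ)
    (((1 / ((n : ℝ) - 1)) • psi μ) * stateSign n)
  rw [← centeredWalk_eq_mul hsum hmarg, Matrix.mul_assoc, stateSign_mul_centeredIndicator,
    Matrix.mul_one, Fintype.card_prod, Fintype.card_fin, Fintype.card_bool, mul_two, pow_add,
    mul_assoc] at hcomm
  exact mul_left_cancel₀ (pow_ne_zero n X_ne_zero) hcomm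

end PaperStmt
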